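/- In the cyclic sliding puzzle on L cells, suppose a legal move sequence σ returns the blank to its original cell, and let w(σ) denote the winding number of the blank, i.e. (number of moves in which the blank shifts from some cell c to c+1) minus (number of moves in which the blank shifts from some cell c to c−1), divided by L. Then the final configuration equals the initial configuration (every token is back on its original cell) if and only if w(σ) ≡ 0 (mod L−1). -/

import Mathlib

/-!
The cyclic sliding puzzle on `L ≥ 3` cells `ℤ/L`.

A configuration places `L - 1` distinguishable tokens (indexed by `Fin (L-1)`)
injectively on the `L` cells, leaving exactly one cell, the *blank*, empty.  A
legal move slides the token on a cell adjacent to the blank into the blank, so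
the blank shifts to the adjacent cell the token vacated.  Since every cell other
than the blank carries a token, a legal move sequence is just a list of
directions: `true` means the blank shifts from its cell `c` to `c + 1`, and
`false` means it shifts from `c` to `c - 1`.  A state is the pair
`(blank cell, token-position function)`.
-/

namespace CyclicPuzzle

/-- One legal move in direction `d`: the blank at `s.1` shifts to
`s.1 + 1` (if `d = true`) or `s.1 - 1` (if `d = false`), and the token that
occupied that cell slides onto the old blank cell. -/
def step (L : ℕ) (s : ZMod L × (Fin (L - 1) → ZMod L)) (d : Bool) :
    ZMod L × (Fin (L - 1) → ZMod L) :=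
  (s.1 + (if d then 1 else -1),
    fun x => if s.2 x = s.1 + (if d then 1 else -1) then s.1 else s.2 x)

/-- The state reached from the state `s` by executing the legal move sequence `σ`. -/
def run (L : ℕ) (s : ZMod L × (Fin (L - 1) → ZMod L)) (σ : List Bool) :
    ZMod L × (Fin (L - 1) → ZMod L) :=
  σ.foldl (step L) s

end CyclicPuzzle

/-!
Measure the distance from the blank to a token clockwise, and regard it modulo `L - 1`. The
distances `1, …, L - 1` are then pairwise distinct, so for a fixed blank this residue locates the
token. Each move of the blank by `±1` changes the residue by `∓1`: for the token that jumps over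
the blank the distance passes between `1` and `L - 1 ≡ 0`. Hence `w` turns of the blank change the
residue by `-w * L ≡ -w`.
-/

namespace CyclicPuzzle

variable {L : ℕ}

/-- The clockwise distance from the blank `b` to the cell `c`, modulo the number `L - 1` of tokens.
It is the invariant of the puzzle, up to the net shift of the blank. For `L ≠ 0` the cast takes the
representative of `c - b` in `{0, …, L - 1}`; it is not a ring homomorphism. -/
def gap (b c : ZMod L) : ZMod (L - 1) :=
  (c - b).cast

/-- The number of moves of the blank to the cell `c + 1` minus the number of those to `c - 1`,
before the division by `L` that makes it the winding number. -/
def netShift (σ : List Bool) : ℤ :=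
  σ.count true - σ.count false

lemma netShift_cons (d : Bool) (σ : List Bool) :
    netShift (d :: σ) = (if d then 1 else -1) + netShift σ := by
  cases d <;> simp [netShift] <;> ring

lemma run_cons (s : ZMod L × (Fin (L - 1) → ZMod L)) (d : Bool) (σ : List Bool) :
    run L s (d :: σ) = run L (step L s d) σ :=
  rfl

lemma run_fst (s : ZMod L × (Fin (L - 1) → ZMod L)) (σ : List Bool) :
    (run L s σ).1 = s.1 + netShift σ := by
  induction σ generalizing s with
  | nil => simp [run, netShift]
  | cons d σ ih =>
    rw [run_cons, ih, netShift_cons]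
    cases d <;> simp [step, add_assoc]

lemma gap_self (b : ZMod L) : gap b b = 0 := by
  simp [gap]

lemma gap_add_one_left {b c : ZMod L} (hc : c ≠ b) : gap (b + 1) c = gap b c - 1 := by
  rw [gap, ← sub_sub, ZMod.cast_sub_one, if_neg (sub_ne_zero.mpr hc), gap]

lemma gap_sub_one_left {b c : ZMod L} (hc : c ≠ b - 1) : gap (b - 1) c = gap b c + 1 := by
  have h : gap b c = gap (b - 1) c - 1 := by simpa using gap_add_one_left hc
  rw [h, sub_add_cancel]

section NeZero

variable [NeZero L]

variable (L) in
lemma natCast_zmod_sub_one_eq_one : (L : ZMod (L - 1)) = 1 := by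
  have hL : L - 1 + 1 = L := Nat.sub_add_cancel (NeZero.one_le (n := L))
  calc (L : ZMod (L - 1)) = ((L - 1 + 1 : ℕ) : ZMod (L - 1)) := by rw [hL]
    _ = 1 := by rw [Nat.cast_succ, ZMod.natCast_self, zero_add]

lemma gap_self_sub_one (b : ZMod L) : gap b (b - 1) = 0 := by
  rw [gap, sub_sub_cancel_left, ZMod.cast_neg_one, natCast_zmod_sub_one_eq_one, sub_self]

lemma gap_right_inj {b c c' : ZMod L} (hc : c ≠ b) (hc' : c' ≠ b) :
    gap b c = gap b c' ↔ c = c' := by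
  refine ⟨fun h ↦ ?_, fun h ↦ h ▸ rfl⟩
  rw [gap, gap, ← ZMod.natCast_val, ← ZMod.natCast_val, ZMod.natCast_eq_natCast_iff] at h
  have pos : 0 < (c - b).val := ZMod.val_pos.mpr (sub_ne_zero.mpr hc)
  have pos' : 0 < (c' - b).val := ZMod.val_pos.mpr (sub_ne_zero.mpr hc')
  have lt := (c - b).val_lt
  have lt' := (c' - b).val_lt
  have val_eq : (c - b).val = (c' - b).val := h.eq_of_abs_lt (abs_lt.mpr (by lia))
  exact sub_left_injective (ZMod.val_injective L val_eq)

end NeZero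

section OneLt

variable [Fact (1 < L)] {s : ZMod L × (Fin (L - 1) → ZMod L)} {x : Fin (L - 1)}

lemma gap_self_add_one (b : ZMod L) : gap b (b + 1) = 1 := by
  have h : gap (b + 1) (b + 1) = gap b (b + 1) - 1 := gap_add_one_left (by simp)
  rwa [gap_self, eq_comm, sub_eq_zero] at h

variable (s x) in
lemma step_snd_ne_fst (d : Bool) : (step L s d).2 x ≠ (step L s d).1 := by
  simp only [step]
  split_ifs <;> simp_all

lemma gap_step (hx : s.2 x ≠ s.1) (d : Bool) :
    gap (step L s d).1 ((step L s d).2 x) = gap s.1 (s.2 x) - (if d then 1 else -1) := by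
  obtain ⟨b, p⟩ := s
  cases d
  · by_cases hp : p x = b - 1
    · have gap_after : gap (b - 1) b = 1 := by rw [← gap_self_add_one (b - 1), sub_add_cancel]
      simp [step, ← sub_eq_add_neg, hp, gap_after, gap_self_sub_one]
    · simpa [step, ← sub_eq_add_neg, hp] using gap_sub_one_left hp
  · by_cases hp : p x = b + 1
    · have gap_after : gap (b + 1) b = 0 := by
        rw [← gap_self_sub_one (b + 1), add_sub_cancel_right]
      simp [step, hp, gap_after, gap_self_add_one]
    · simpa [step, hp] using gap_add_one_left hx

lemma run_snd_ne_fst (hx : s.2 x ≠ s.1) (σ : List Bool) : (run L s σ).2 x ≠ (run L s σ).1 := by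
  induction σ generalizing s with
  | nil => exact hx
  | cons d _ ih => exact ih (step_snd_ne_fst s x d)

lemma gap_run (hx : s.2 x ≠ s.1) (σ : List Bool) :
    gap (run L s σ).1 ((run L s σ).2 x) = gap s.1 (s.2 x) - netShift σ := by
  induction σ generalizing s with
  | nil => simp [run, netShift]
  | cons d σ ih =>
    rw [run_cons, ih (step_snd_ne_fst s x d), gap_step hx, netShift_cons, sub_sub]
    push_cast
    rfl

end OneLt

end CyclicPuzzle

open CyclicPuzzle in
theorem statement9_general (L : ℕ) (hL : 2 ≤ L)
    (b₀ : ZMod L) (p₀ : Fin (L - 1) → ZMod L) (x : Fin (L - 1)) (hx : p₀ x ≠ b₀)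
    (σ : List Bool) (w : ℤ)
    (hw : (σ.count true : ℤ) - (σ.count false : ℤ) = w * L) :
    (run L (b₀, p₀) σ).2 x = p₀ x ↔ (w : ZMod (L - 1)) = 0 := by
  have : Fact (1 < L) := ⟨hL⟩
  have blank_returns : (run L (b₀, p₀) σ).1 = b₀ := by simp [run_fst, netShift, hw]
  have token_ne_blank : (run L (b₀, p₀) σ).2 x ≠ b₀ :=
    (run_snd_ne_fst (s := (b₀, p₀)) hx σ).trans_eq blank_returns
  have gap_final : gap b₀ ((run L (b₀, p₀) σ).2 x) = gap b₀ (p₀ x) - w := by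
    have h := gap_run (s := (b₀, p₀)) hx σ
    rwa [blank_returns, netShift, hw, Int.cast_mul, Int.cast_natCast, natCast_zmod_sub_one_eq_one,
      mul_one] at h
  rw [← gap_right_inj token_ne_blank hx, gap_final, sub_eq_self]

open CyclicPuzzle in
/-- In the cyclic sliding puzzle on `L ≥ 3` cells, suppose a
legal move sequence `σ` returns the blank to its original cell `b₀`, and let
`w` be the winding number of the blank, i.e.
`(#moves with blank shift c ↦ c+1) - (#moves with blank shift c ↦ c-1) = w * L`.
Then the final configuration equals the initial configuration (every token is
back on its original cell) if and only if `w ≡ 0 (mod L-1)`. -/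
theorem statement9 (L : ℕ) (hL : 3 ≤ L)
    (b₀ : ZMod L) (p₀ : Fin (L - 1) → ZMod L)
    (hinj : Function.Injective p₀) (hb : ∀ x, p₀ x ≠ b₀)
    (σ : List Bool) (w : ℤ)
    (hret : (run L (b₀, p₀) σ).1 = b₀)
    (hw : (σ.count true : ℤ) - (σ.count false : ℤ) = w * L) :
    (run L (b₀, p₀) σ).2 = p₀ ↔ (w : ZMod (L - 1)) = 0 := by
  have : Nonempty (Fin (L - 1)) := ⟨⟨0, by lia⟩⟩
  simp [funext_iff, statement9_general L (by lia) b₀ p₀ _ (hb _) σ w hw]
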